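/- arXiv:2004.14521 — 2 statements merged into one kernel-verified Lean document; each statement's English description precedes it below -/
import Mathlib

section
/- In the setting of the scaled proximal gradient one-step theorem (g_n continuously differentiable and h_n convex proper almost surely, C_n random positive definite matrices, with assumptions (i) and (ii) of that theorem), suppose θ̂_n is not necessarily a minimizer of g_n + h_n but instead satisfies the approximate fixed-point condition √n ‖prox_{h_n}^{C_n}(θ̂_n − C_n⁻¹ ∇g_n(θ̂_n)) − θ̂_n‖ → 0 in probability. Then for any √n-consistent estimator θ̂_init,n of θ̂_n, the one-step estimator θ̂_ose,n ∈ prox_{h_n}^{C_n}(θ̂_init,n − C_n⁻¹ ∇g_n(θ̂_init,n)) is asymptotically equivalent to θ̂_n. -/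
open MeasureTheory Filter Topology ProbabilityTheory

noncomputable section

/-- Apply a `d × d` real matrix to a vector of `EuclideanSpace ℝ (Fin d)`. -/
def mApp {d : ℕ} (C : Matrix (Fin d) (Fin d) ℝ) (v : EuclideanSpace ℝ (Fin d)) :
    EuclideanSpace ℝ (Fin d) :=
  Matrix.toEuclideanLin C v

/-- The squared `C`-norm `‖v‖_C² = vᵀ C v`. -/
def cnormSq {d : ℕ} (C : Matrix (Fin d) (Fin d) ℝ) (v : EuclideanSpace ℝ (Fin d)) : ℝ :=
  inner ℝ v (mApp C v)

/-- The scaled proximal operator (as a set of minimizers):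
`prox_f^C(x) = argmin_w { f(w) + (1/2)‖w − x‖_C² }`. -/
def proxSet {d : ℕ} (f : EuclideanSpace ℝ (Fin d) → EReal) (C : Matrix (Fin d) (Fin d) ℝ)
    (x : EuclideanSpace ℝ (Fin d)) : Set (EuclideanSpace ℝ (Fin d)) :=
  {w | ∀ u, f w + ((cnormSq C (w - x) / 2 : ℝ) : EReal) ≤ f u + ((cnormSq C (u - x) / 2 : ℝ) : EReal)}

/-- A proper extended-real-valued function: not identically `+∞`, never `−∞`. -/
def ProperFn {d : ℕ} (f : EuclideanSpace ℝ (Fin d) → EReal) : Prop :=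
  (∃ x, f x ≠ ⊤) ∧ ∀ x, f x ≠ ⊥

/-- Convexity for extended-real-valued functions. -/
def ConvexFnE {d : ℕ} (f : EuclideanSpace ℝ (Fin d) → EReal) : Prop :=
  ∀ x y : EuclideanSpace ℝ (Fin d), ∀ a b : ℝ, 0 ≤ a → 0 ≤ b → a + b = 1 →
    f (a • x + b • y) ≤ (a : EReal) * f x + (b : EReal) * f y

/-- Operator norm of a matrix acting on Euclidean space. -/
def matNorm {d : ℕ} (C : Matrix (Fin d) (Fin d) ℝ) : ℝ :=
  ‖(Matrix.toEuclideanCLM (𝕜 := ℝ) C : EuclideanSpace ℝ (Fin d) →L[ℝ] EuclideanSpace ℝ (Fin d))‖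

/-- Convergence to zero in probability of a sequence of random vectors. -/
def TendstoInProb {Ω : Type*} [MeasurableSpace Ω] (P : Measure Ω) {E : Type*} [Norm E]
    (Y : ℕ → Ω → E) : Prop :=
  ∀ ε : ℝ, 0 < ε → Tendsto (fun n => P {ω | ε ≤ ‖Y n ω‖}) atTop (𝓝 0)

/-- Boundedness in probability (`O_P(1)`). -/
def BoundedInProb {Ω : Type*} [MeasurableSpace Ω] (P : Measure Ω) {E : Type*} [Norm E]
    (Y : ℕ → Ω → E) : Prop :=
  ∀ ε : ℝ, 0 < ε → ∃ M : ℝ, ∃ N : ℕ, ∀ n ≥ N, P {ω | M < ‖Y n ω‖} ≤ ENNReal.ofReal ε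

/-- `Y_n = O_P(r_n)`. -/
def BigOP {Ω : Type*} [MeasurableSpace Ω] (P : Measure Ω) {E : Type*} [Norm E]
    (Y : ℕ → Ω → E) (r : ℕ → ℝ) : Prop :=
  ∀ ε : ℝ, 0 < ε → ∃ M : ℝ, ∃ N : ℕ, ∀ n ≥ N, P {ω | M * r n < ‖Y n ω‖} ≤ ENNReal.ofReal ε

/-- A sequence of events holds with high probability (probability tending to one). -/
def WithHighProb {Ω : Type*} [MeasurableSpace Ω] (P : Measure Ω) (A : ℕ → Set Ω) : Prop :=
  Tendsto (fun n => P (A n)) atTop (𝓝 1)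

end

/-!
The resolvent of a convex function is firmly nonexpansive in the `C`-inner product: if `a` and `b`
are the proximal points of `x` and `y`, then `‖a - b‖_C² ≤ ⟨a - b, C (x - y)⟩`. For gradient steps
`x = p - C⁻¹ u` and `y = q - C⁻¹ v` the right-hand side equals
`⟨a - b, (C - H) (p - q) - (u - v - H (p - q))⟩`. Assumption (ii) makes `C - H` small, so `C`
inherits the coercivity of `H` and the first term is `o_P(1) * O_P(1)` at scale `√n`; the second is
the linearization error controlled by (i). Hence the steps from `θ̂_init` and `θ̂` agree up to
`o_P(n^{-1/2})`.
-/

section Convergence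

/-- The filter on `ℕ × Ω` of events whose probability tends to one along the sequence. It turns
`o_P` calculus into calculus of limits: convergence in probability to zero is convergence to zero
along this filter. Defined through complements, so that no measurability is needed. -/
def inProb {Ω : Type*} [MeasurableSpace Ω] (P : Measure Ω) : Filter (ℕ × Ω) :=
  Filter.comk (fun S => Tendsto (fun n => P {ω | (n, ω) ∈ S}) atTop (𝓝 0))
    (by simp)
    (fun _ hT _ hST => tendsto_of_tendsto_of_tendsto_of_le_of_le tendsto_const_nhds hT
      (fun _ => zero_le) fun _ => measure_mono fun _ hω => hST hω)
    (fun S hS T hT => by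
      have hadd : Tendsto (fun n => P {ω | (n, ω) ∈ S} + P {ω | (n, ω) ∈ T}) atTop (𝓝 0) := by
        simpa only [add_zero] using hS.add hT
      exact tendsto_of_tendsto_of_tendsto_of_le_of_le tendsto_const_nhds hadd (fun _ => zero_le)
        fun _ => measure_union_le _ _)

variable {Ω : Type*} [MeasurableSpace Ω] {P : Measure Ω}

lemma eventually_inProb_iff {Q : ℕ × Ω → Prop} :
    (∀ᶠ x in inProb P, Q x) ↔ Tendsto (fun n => P {ω | ¬ Q (n, ω)}) atTop (𝓝 0) :=
  Iff.rfl

lemma eventually_inProb_of_forall_ae {Q : ℕ → Ω → Prop} (hQ : ∀ n, ∀ᵐ ω ∂P, Q n ω) :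
    ∀ᶠ x in inProb P, Q x.1 x.2 := by
  rw [eventually_inProb_iff]
  simp only [fun n => ae_iff.1 (hQ n), tendsto_const_nhds]

lemma tendstoInProb_iff_tendsto {E : Type*} [SeminormedAddCommGroup E] {Y : ℕ → Ω → E} :
    TendstoInProb P Y ↔ Tendsto (fun x : ℕ × Ω => Y x.1 x.2) (inProb P) (𝓝 0) := by
  simp only [NormedAddGroup.tendsto_nhds_zero, eventually_inProb_iff, not_lt, TendstoInProb]

lemma TendstoInProb.add {E : Type*} [SeminormedAddCommGroup E] {Y Z : ℕ → Ω → E}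
    (hY : TendstoInProb P Y) (hZ : TendstoInProb P Z) :
    TendstoInProb P fun n ω => Y n ω + Z n ω := by
  rw [tendstoInProb_iff_tendsto] at *
  simpa only [add_zero] using hY.add hZ

lemma BoundedInProb.eventually_inProb {E : Type*} [Norm E] {Y : ℕ → Ω → E}
    (hY : BoundedInProb P Y) {Q : ℕ × Ω → Prop}
    (hQ : ∀ M > 0, ∀ᶠ x in inProb P, ‖Y x.1 x.2‖ < M → Q x) : ∀ᶠ x in inProb P, Q x := by
  rw [eventually_inProb_iff, ENNReal.tendsto_nhds_zero]
  intro ε hε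
  obtain ⟨ρ, -, hρ, hρε⟩ := ENNReal.lt_iff_exists_real_btwn.1 (ENNReal.half_pos hε.ne')
  obtain ⟨M, N, hM⟩ := hY ρ (ENNReal.ofReal_pos.1 hρ)
  have hQM := ENNReal.tendsto_nhds_zero.1 (eventually_inProb_iff.1 (hQ (|M| + 1) (by positivity)))
    (ε / 2) (ENNReal.half_pos hε.ne')
  filter_upwards [hQM, eventually_ge_atTop N] with n hn hNn
  calc P {ω | ¬ Q (n, ω)}
      ≤ P ({ω | M < ‖Y n ω‖} ∪ {ω | ¬ (‖Y n ω‖ < |M| + 1 → Q (n, ω))}) := by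
        refine measure_mono fun ω hω => or_iff_not_imp_left.2 fun hle himp => hω (himp ?_)
        have hYM : ‖Y n ω‖ ≤ M := not_lt.1 hle
        linarith [le_abs_self M]
    _ ≤ ε / 2 + ε / 2 :=
        (measure_union_le _ _).trans (add_le_add ((hM n hNn).trans hρε.le) hn)
    _ = ε := ENNReal.add_halves ε

lemma TendstoInProb.norm_mul_norm {E F : Type*} [SeminormedAddCommGroup E]
    [SeminormedAddCommGroup F] {Z : ℕ → Ω → E} {Y : ℕ → Ω → F}
    (hZ : TendstoInProb P Z) (hY : BoundedInProb P Y) :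
    TendstoInProb P fun n ω => ‖Z n ω‖ * ‖Y n ω‖ := by
  rw [tendstoInProb_iff_tendsto, NormedAddGroup.tendsto_nhds_zero] at *
  refine fun ε hε => hY.eventually_inProb fun M hM => ?_
  filter_upwards [hZ (ε / M) (by positivity)] with x hZx hYx
  calc ‖‖Z x.1 x.2‖ * ‖Y x.1 x.2‖‖
      = ‖Z x.1 x.2‖ * ‖Y x.1 x.2‖ := Real.norm_of_nonneg (by positivity)
    _ < ε / M * M := mul_lt_mul'' hZx hYx (norm_nonneg _) (norm_nonneg _)
    _ = ε := div_mul_cancel₀ ε hM.ne'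

lemma tendstoInProb_eval_of_boundedInProb {α E F : Type*} [Norm E] [SeminormedAddCommGroup F]
    {S : ℕ → Ω → α → E} {R : ℕ → Ω → α → F} {θ : ℕ → Ω → α}
    (hR : ∀ M : ℝ, 0 < M → ∀ ε : ℝ, 0 < ε →
      Tendsto (fun n => P {ω | ∃ t, ‖S n ω t‖ < M ∧ ε ≤ ‖R n ω t‖}) atTop (𝓝 0))
    (hθ : BoundedInProb P fun n ω => S n ω (θ n ω)) :
    TendstoInProb P fun n ω => R n ω (θ n ω) := by
  rw [tendstoInProb_iff_tendsto, NormedAddGroup.tendsto_nhds_zero]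
  refine fun ε hε => hθ.eventually_inProb fun M hM => ?_
  have hunif : ∀ᶠ x in inProb P, ¬ ∃ t, ‖S x.1 x.2 t‖ < M ∧ ε ≤ ‖R x.1 x.2 t‖ := by
    simpa only [eventually_inProb_iff, not_not] using hR M hM ε hε
  filter_upwards [hunif] with x hx hSx
  exact not_le.1 fun hle => hx ⟨_, hSx, hle⟩

end Convergence

lemma tendsto_of_mul_eq_of_tendsto_one {ι R : Type*} [NormedRing R] [HasSummableGeomSeries R]
    {l : Filter ι} {c u : ι → R} {h : R} (hu : Tendsto u l (𝓝 1))
    (hcu : ∀ᶠ i in l, c i * u i = h) : Tendsto c l (𝓝 h) := by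
  have hinv : Tendsto (fun i => Ring.inverse (u i)) l (𝓝 1) := by
    simpa only [Units.val_one, Ring.inverse_one, Function.comp_def] using
      (NormedRing.inverse_continuousAt (1 : Rˣ)).tendsto.comp hu
  have hlim : Tendsto (fun i => h * Ring.inverse (u i)) l (𝓝 h) := by
    simpa only [mul_one] using hinv.const_mul h
  refine hlim.congr' ?_
  filter_upwards [hcu, hu (Units.nhds (1 : Rˣ))] with i hi hunit
  rw [← hi, Ring.mul_inverse_cancel_right _ _ hunit]

section OneStep

-- For this norm `‖C‖` is definitionally `matNorm C`.
open scoped Matrix.Norms.L2Operator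

section Matrix

variable {d : ℕ} {C H : Matrix (Fin d) (Fin d) ℝ}

lemma mApp_mApp_inv (hC : IsUnit C) (v : EuclideanSpace ℝ (Fin d)) :
    mApp C (mApp C⁻¹ v) = v := by
  rw [mApp, mApp, ← LinearMap.comp_apply, ← Matrix.toLpLin_mul_same,
    Matrix.mul_nonsing_inv _ ((Matrix.isUnit_iff_isUnit_det C).1 hC), Matrix.toLpLin_one]
  rfl

lemma norm_mApp_le (C : Matrix (Fin d) (Fin d) ℝ) (v : EuclideanSpace ℝ (Fin d)) :
    ‖mApp C v‖ ≤ ‖C‖ * ‖v‖ :=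
  Matrix.l2_opNorm_mulVec C v

lemma inner_mApp_comm (hC : C.IsHermitian) (u v : EuclideanSpace ℝ (Fin d)) :
    inner ℝ u (mApp C v) = inner ℝ v (mApp C u) := by
  rw [real_inner_comm]
  exact Matrix.isSymmetric_toEuclideanLin_iff.2 hC v u

lemma cnormSq_add_smul (hC : C.IsHermitian) (u v : EuclideanSpace ℝ (Fin d)) (t : ℝ) :
    cnormSq C (u + t • v) =
      cnormSq C u + 2 * t * inner ℝ v (mApp C u) + t ^ 2 * cnormSq C v := by
  have hsymm := inner_mApp_comm hC u v
  simp only [cnormSq, mApp, map_add, map_smul, inner_add_left, inner_add_right,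
    real_inner_smul_left, real_inner_smul_right] at hsymm ⊢
  rw [hsymm]
  ring

lemma cnormSq_le_cnormSq_add (C H : Matrix (Fin d) (Fin d) ℝ) (v : EuclideanSpace ℝ (Fin d)) :
    cnormSq H v ≤ cnormSq C v + ‖C - H‖ * ‖v‖ ^ 2 := by
  have hdiff : cnormSq H v = cnormSq C v - inner ℝ v (mApp (C - H) v) := by
    simp only [cnormSq, mApp, map_sub, LinearMap.sub_apply, inner_sub_right]
    ring
  have hinner : |inner ℝ v (mApp (C - H) v)| ≤ ‖C - H‖ * ‖v‖ ^ 2 := calc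
    |inner ℝ v (mApp (C - H) v)| ≤ ‖v‖ * ‖mApp (C - H) v‖ := abs_real_inner_le_norm _ _
    _ ≤ ‖v‖ * (‖C - H‖ * ‖v‖) := by gcongr; exact norm_mApp_le _ _
    _ = ‖C - H‖ * ‖v‖ ^ 2 := by ring
  linarith [(abs_le.1 hinner).1]

open scoped MatrixOrder in
lemma exists_pos_mul_sq_norm_le_cnormSq (hH : H.PosDef) :
    ∃ m : ℝ, 0 < m ∧ ∀ v : EuclideanSpace ℝ (Fin d), m * ‖v‖ ^ 2 ≤ cnormSq H v := by
  obtain ⟨m, hm, hmH⟩ : ∃ m > 0, algebraMap ℝ (Matrix (Fin d) (Fin d) ℝ) m ≤ H := by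
    rcases subsingleton_or_nontrivial (Matrix (Fin d) (Fin d) ℝ)
    · exact ⟨1, one_pos, (Subsingleton.elim _ _).le⟩
    · exact (CFC.exists_pos_algebraMap_le_iff hH.isHermitian.isSelfAdjoint).2
        fun _ hx => hH.isStrictlyPositive.spectrum_pos hx
  refine ⟨m, hm, fun v => ?_⟩
  have hpositive := Matrix.isPositive_toEuclideanLin_iff.2 (Matrix.le_iff.1 hmH)
  simpa [cnormSq, mApp, Algebra.algebraMap_eq_smul_one, inner_sub_right,
    real_inner_smul_right] using hpositive.re_inner_nonneg_right v

end Matrix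

section Prox

variable {d : ℕ} {f : EuclideanSpace ℝ (Fin d) → EReal} {C H : Matrix (Fin d) (Fin d) ℝ}
  {a b x y p q u v : EuclideanSpace ℝ (Fin d)}

lemma exists_eq_coe_of_mem_proxSet (hf : ProperFn f) (ha : a ∈ proxSet f C x) :
    ∃ s : ℝ, f a = s := by
  obtain ⟨⟨z, hz⟩, hbot⟩ := hf
  have hlt : f a + ((cnormSq C (a - x) / 2 : ℝ) : EReal) < ⊤ :=
    (ha z).trans_lt (EReal.add_lt_top hz (EReal.coe_ne_top _))
  have htop : f a ≠ ⊤ := fun h => by simp [h] at hlt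
  exact ⟨_, (EReal.coe_toReal htop (hbot a)).symm⟩

lemma le_add_inner_of_mem_proxSet (hC : C.IsHermitian) (hf : ConvexFnE f)
    (ha : a ∈ proxSet f C x) {s t : ℝ} (hs : f a = s) (ht : f b = t) :
    s ≤ t + inner ℝ (b - a) (mApp C (a - x)) := by
  have hsegment : ∀ ε : ℝ, 0 < ε → ε ≤ 1 →
      s ≤ t + inner ℝ (b - a) (mApp C (a - x)) + ε / 2 * cnormSq C (b - a) := by
    intro ε hε hε1
    have hmin := (ha ((1 - ε) • a + ε • b)).trans
      (add_le_add_left (hf a b (1 - ε) ε (by linarith) hε.le (by ring)) _)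
    rw [hs, ht, show (1 - ε) • a + ε • b - x = (a - x) + ε • (b - a) by module,
      cnormSq_add_smul hC] at hmin
    norm_cast at hmin
    refine le_of_mul_le_mul_left ?_ hε
    linarith
  have hlim : Tendsto (fun ε : ℝ => t + inner ℝ (b - a) (mApp C (a - x)) +
      ε / 2 * cnormSq C (b - a)) (𝓝[>] 0) (𝓝 (t + inner ℝ (b - a) (mApp C (a - x)))) :=
    tendsto_nhdsWithin_of_tendsto_nhds (Continuous.tendsto' (by fun_prop) _ _ (by simp))
  refine ge_of_tendsto hlim ?_
  filter_upwards [Ioc_mem_nhdsGT one_pos] with ε hε using hsegment ε hε.1 hε.2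

lemma cnormSq_sub_le_inner_of_mem_proxSet (hC : C.IsHermitian) (hf : ConvexFnE f)
    (hproper : ProperFn f) (ha : a ∈ proxSet f C x) (hb : b ∈ proxSet f C y) :
    cnormSq C (a - b) ≤ inner ℝ (a - b) (mApp C (x - y)) := by
  obtain ⟨s, hs⟩ := exists_eq_coe_of_mem_proxSet hproper ha
  obtain ⟨t, ht⟩ := exists_eq_coe_of_mem_proxSet hproper hb
  have hab := le_add_inner_of_mem_proxSet hC hf ha hs ht
  have hba := le_add_inner_of_mem_proxSet hC hf hb ht hs
  simp only [cnormSq, mApp, map_sub, inner_sub_left, inner_sub_right] at hab hba ⊢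
  linarith

lemma norm_sub_le_of_mem_proxSet_step (hC : C.IsHermitian) (hunit : IsUnit C) (hf : ConvexFnE f)
    (hproper : ProperFn f) {m : ℝ} (hH : ∀ w, m * ‖w‖ ^ 2 ≤ cnormSq H w)
    (ha : a ∈ proxSet f C (p - mApp C⁻¹ u)) (hb : b ∈ proxSet f C (q - mApp C⁻¹ v)) :
    (m - ‖C - H‖) * ‖a - b‖ ≤ ‖C - H‖ * ‖p - q‖ + ‖u - v - mApp H (p - q)‖ := by
  have hstep : mApp C ((p - mApp C⁻¹ u) - (q - mApp C⁻¹ v)) =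
      mApp (C - H) (p - q) - (u - v - mApp H (p - q)) := by
    have hu := mApp_mApp_inv hunit u
    have hv := mApp_mApp_inv hunit v
    simp only [mApp, map_sub, LinearMap.sub_apply] at hu hv ⊢
    rw [hu, hv]
    abel
  have hfirm := cnormSq_sub_le_inner_of_mem_proxSet hC hf hproper ha hb
  rw [hstep] at hfirm
  have hinner : inner ℝ (a - b) (mApp (C - H) (p - q) - (u - v - mApp H (p - q))) ≤
      ‖a - b‖ * (‖C - H‖ * ‖p - q‖ + ‖u - v - mApp H (p - q)‖) := by
    refine (real_inner_le_norm _ _).trans ?_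
    gcongr
    exact (norm_sub_le _ _).trans (by gcongr; exact norm_mApp_le _ _)
  rcases (norm_nonneg (a - b)).eq_or_lt with hzero | hpos
  · rw [← hzero, mul_zero]
    positivity
  · refine le_of_mul_le_mul_left ?_ hpos
    linarith [hH (a - b), cnormSq_le_cnormSq_add C H (a - b)]

end Prox

lemma tendstoInProb_sub_of_inv_mul {d : ℕ} {Ω : Type*} [MeasurableSpace Ω] {P : Measure Ω}
    {C : ℕ → Ω → Matrix (Fin d) (Fin d) ℝ} {H : Matrix (Fin d) (Fin d) ℝ}
    (hC : ∀ n, ∀ᵐ ω ∂P, IsUnit (C n ω))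
    (hCH : TendstoInProb P fun n ω => (C n ω)⁻¹ * H - 1) :
    TendstoInProb P fun n ω => C n ω - H := by
  rw [tendstoInProb_iff_tendsto, tendsto_sub_nhds_zero_iff] at *
  refine tendsto_of_mul_eq_of_tendsto_one hCH ?_
  filter_upwards [eventually_inProb_of_forall_ae hC] with x hx
  exact Matrix.mul_nonsing_inv_cancel_left _ _ ((Matrix.isUnit_iff_isUnit_det _).1 hx)

lemma tendstoInProb_smul_sub_of_mem_proxSet_step {d : ℕ} {Ω : Type*} [MeasurableSpace Ω]
    {P : Measure Ω} {r : ℕ → ℝ} {h : ℕ → Ω → EuclideanSpace ℝ (Fin d) → EReal}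
    {C : ℕ → Ω → Matrix (Fin d) (Fin d) ℝ} {H : Matrix (Fin d) (Fin d) ℝ}
    {p q u v a b : ℕ → Ω → EuclideanSpace ℝ (Fin d)}
    (hh : ∀ n, ∀ᵐ ω ∂P, ConvexFnE (h n ω) ∧ ProperFn (h n ω))
    (hC : ∀ n, ∀ᵐ ω ∂P, (C n ω).PosDef) (hH : H.PosDef)
    (hCH : TendstoInProb P fun n ω => C n ω - H)
    (hpq : BoundedInProb P fun n ω => r n • (p n ω - q n ω))
    (huv : TendstoInProb P fun n ω => r n • (u n ω - v n ω - mApp H (p n ω - q n ω)))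
    (ha : ∀ n, ∀ᵐ ω ∂P, a n ω ∈ proxSet (h n ω) (C n ω) (p n ω - mApp (C n ω)⁻¹ (u n ω)))
    (hb : ∀ n, ∀ᵐ ω ∂P, b n ω ∈ proxSet (h n ω) (C n ω) (q n ω - mApp (C n ω)⁻¹ (v n ω))) :
    TendstoInProb P fun n ω => r n • (a n ω - b n ω) := by
  obtain ⟨m, hm, hcoercive⟩ := exists_pos_mul_sq_norm_le_cnormSq hH
  have hmain := tendstoInProb_iff_tendsto.1 (hCH.norm_mul_norm hpq)
  have hbound := (hmain.add (tendstoInProb_iff_tendsto.1 huv).norm).const_mul (2 / m)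
  simp only [norm_zero, add_zero, mul_zero] at hbound
  have hCHsmall := NormedAddGroup.tendsto_nhds_zero.1 (tendstoInProb_iff_tendsto.1 hCH)
    (m / 2) (by positivity)
  refine tendstoInProb_iff_tendsto.2 (squeeze_zero_norm' ?_ hbound)
  filter_upwards [hCHsmall, eventually_inProb_of_forall_ae hh, eventually_inProb_of_forall_ae hC,
    eventually_inProb_of_forall_ae ha, eventually_inProb_of_forall_ae hb]
    with ⟨n, ω⟩ hsmall ⟨hconvex, hproper⟩ hCx hax hbx
  have hstep := norm_sub_le_of_mem_proxSet_step hCx.isHermitian hCx.isUnit hconvex hproper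
    hcoercive hax hbx
  have hhalf : m / 2 * ‖a n ω - b n ω‖ ≤ (m - ‖C n ω - H‖) * ‖a n ω - b n ω‖ := by
    gcongr
    linarith
  have hscaled := mul_le_mul_of_nonneg_left (hhalf.trans hstep) (norm_nonneg (r n))
  rw [div_mul_eq_mul_div, le_div_iff₀ hm]
  simp only [norm_smul]
  linarith

theorem one_step_scaled_proximal_gradient_approx_fixed_point_general {d : ℕ} {Ω : Type*}
    [MeasurableSpace Ω] {P : Measure Ω} {r : ℕ → ℝ}
    {G : ℕ → Ω → EuclideanSpace ℝ (Fin d) → EuclideanSpace ℝ (Fin d)}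
    {h : ℕ → Ω → EuclideanSpace ℝ (Fin d) → EReal}
    {C : ℕ → Ω → Matrix (Fin d) (Fin d) ℝ} {H : Matrix (Fin d) (Fin d) ℝ}
    {θhat θinit θose φ : ℕ → Ω → EuclideanSpace ℝ (Fin d)}
    (hh : ∀ n, ∀ᵐ ω ∂P, ConvexFnE (h n ω) ∧ ProperFn (h n ω))
    (hC : ∀ n, ∀ᵐ ω ∂P, (C n ω).PosDef)
    (hφmem : ∀ n, ∀ᵐ ω ∂P,
      φ n ω ∈ proxSet (h n ω) (C n ω) (θhat n ω - mApp (C n ω)⁻¹ (G n ω (θhat n ω))))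
    (hφ : TendstoInProb P fun n ω => r n • (φ n ω - θhat n ω))
    (hH : H.PosDef)
    (hG : ∀ M : ℝ, 0 < M → ∀ ε : ℝ, 0 < ε →
      Tendsto (fun n => P {ω | ∃ θ, ‖r n • (θ - θhat n ω)‖ < M ∧
        ε ≤ ‖r n • (G n ω θ - G n ω (θhat n ω) - mApp H (θ - θhat n ω))‖}) atTop (𝓝 0))
    (hCH : TendstoInProb P fun n ω => (C n ω)⁻¹ * H - 1)
    (hinit : BoundedInProb P fun n ω => r n • (θinit n ω - θhat n ω))
    (hose : ∀ n, ∀ᵐ ω ∂P,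
      θose n ω ∈ proxSet (h n ω) (C n ω) (θinit n ω - mApp (C n ω)⁻¹ (G n ω (θinit n ω)))) :
    TendstoInProb P fun n ω => r n • (θose n ω - θhat n ω) := by
  have hC_tendsto : TendstoInProb P fun n ω => C n ω - H :=
    tendstoInProb_sub_of_inv_mul (fun n => (hC n).mono fun _ hCω => hCω.isUnit) hCH
  have hremainder : TendstoInProb P fun n ω =>
      r n • (G n ω (θinit n ω) - G n ω (θhat n ω) - mApp H (θinit n ω - θhat n ω)) :=
    tendstoInProb_eval_of_boundedInProb (θ := θinit) hG hinit
  have hsteps : TendstoInProb P fun n ω => r n • (θose n ω - φ n ω) :=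
    tendstoInProb_smul_sub_of_mem_proxSet_step hh hC hH hC_tendsto hinit hremainder hose hφmem
  simpa only [← smul_add, sub_add_sub_cancel] using hsteps.add hφ

end OneStep

open MeasureTheory Filter Topology in
/-- Corollary 2.2: the conclusion of the scaled proximal gradient one-step theorem still holds
when `θ̂ₙ` is only an approximate fixed point (at rate `o_P(n^{-1/2})`) of the scaled proximal
gradient map, rather than a minimizer of `gₙ + hₙ`. -/
theorem one_step_scaled_proximal_gradient_approx_fixed_point
    (d : ℕ) (hd : 1 ≤ d)
    {Ω : Type*} [MeasurableSpace Ω] (P : MeasureTheory.Measure Ω) [IsProbabilityMeasure P]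
    (g : ℕ → Ω → EuclideanSpace ℝ (Fin d) → ℝ)
    (dg : ℕ → Ω → EuclideanSpace ℝ (Fin d) → EuclideanSpace ℝ (Fin d))
    (h : ℕ → Ω → EuclideanSpace ℝ (Fin d) → EReal)
    (C : ℕ → Ω → Matrix (Fin d) (Fin d) ℝ)
    (θhat θinit θose : ℕ → Ω → EuclideanSpace ℝ (Fin d))
    -- P-a.s., gₙ is continuously differentiable with gradient dgₙ
    (hg : ∀ n, ∀ᵐ ω ∂P, (∀ θ, HasGradientAt (g n ω) (dg n ω θ) θ) ∧ Continuous (dg n ω))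
    -- P-a.s., hₙ is convex and proper
    (hh : ∀ n, ∀ᵐ ω ∂P, ConvexFnE (h n ω) ∧ ProperFn (h n ω))
    -- the scaling matrices are symmetric positive definite
    (hC : ∀ n, ∀ᵐ ω ∂P, (C n ω).PosDef)
    -- the approximate fixed point condition:
    -- √n ‖prox_{hₙ}^{Cₙ}(θ̂ₙ − Cₙ⁻¹ ∇gₙ(θ̂ₙ)) − θ̂ₙ‖ → 0 in probability,
    -- witnessed by a random selection φ from the prox set
    (φ : ℕ → Ω → EuclideanSpace ℝ (Fin d))
    (hφmem : ∀ n, ∀ᵐ ω ∂P,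
      φ n ω ∈ proxSet (h n ω) (C n ω) (θhat n ω - mApp (C n ω)⁻¹ (dg n ω (θhat n ω))))
    (hφ : TendstoInProb P (fun n ω => Real.sqrt n • (φ n ω - θhat n ω)))
    -- assumption (i): uniform stochastic differentiability with positive definite H
    (H : Matrix (Fin d) (Fin d) ℝ) (hH : H.PosDef)
    (hi : ∀ M : ℝ, 0 < M → ∀ ε : ℝ, 0 < ε →
      Tendsto (fun n : ℕ => P {ω | ∃ θ, Real.sqrt n * ‖θ - θhat n ω‖ < M ∧
        ε ≤ Real.sqrt n * ‖(dg n ω θ - dg n ω (θhat n ω)) - mApp H (θ - θhat n ω)‖})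
        atTop (𝓝 0))
    -- assumption (ii): Cₙ⁻¹ H → I in probability
    (hii : ∀ ε : ℝ, 0 < ε →
      Tendsto (fun n => P {ω | ε ≤ matNorm ((C n ω)⁻¹ * H - 1)}) atTop (𝓝 0))
    -- θ̂_init is a √n-consistent estimator of θ̂
    (hinit : BoundedInProb P (fun n ω => Real.sqrt n • (θinit n ω - θhat n ω)))
    -- the one-step estimator: a single scaled proximal gradient step from θ̂_init
    (hose : ∀ n, ∀ᵐ ω ∂P,
      θose n ω ∈ proxSet (h n ω) (C n ω)
        (θinit n ω - mApp (C n ω)⁻¹ (dg n ω (θinit n ω)))) :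
    -- conclusion: asymptotic equivalence of θ̂_ose and θ̂
    TendstoInProb P (fun n ω => Real.sqrt n • (θose n ω - θhat n ω)) :=
  one_step_scaled_proximal_gradient_approx_fixed_point_general hh hC hφmem hφ hH
    (by simpa only [norm_smul, Real.norm_of_nonneg (Real.sqrt_nonneg _)] using hi) hii hinit hose
end

section
/- Let h : ℝ^d → ℝ ∪ {∞} be proper and convex and let C be a symmetric positive definite d×d matrix with largest and smallest eigenvalues λ_max(C) and λ_min(C). Then for any x₁, x₂ ∈ ℝ^d and any w₁ ∈ prox_h^C(x₁), w₂ ∈ prox_h^C(x₂), one has ‖w₁ − w₂‖ ≤ √(λ_max(C)/λ_min(C)) · ‖x₁ − x₂‖ in the Euclidean norm; in particular prox_h^C is Lipschitz continuous with constant √(λ_max(C)/λ_min(C)). -/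
open MeasureTheory Filter Topology ProbabilityTheory

/-!
Minimality of `w` along the segment towards `u` gives, to first order, the variational inequality
`g w - g u ≤ B (w - x) (u - w)`, where `B` is the bilinear form of the quadratic penalty. Adding the
two inequalities obtained for `(w₁, x₁)` and `(w₂, x₂)` cancels `g` and yields firm nonexpansiveness
`B (w₁ - w₂) (w₁ - w₂) ≤ B (x₁ - x₂) (w₁ - w₂)`, hence nonexpansiveness for the seminorm of `B`.
Comparing that seminorm with the norm, `m * ‖v‖ ^ 2 ≤ B v v ≤ M * ‖v‖ ^ 2`, costs the factor
`√(M / m)`.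
-/

section BilinearProx

variable {E : Type*} [AddCommGroup E] [Module ℝ E] {B : LinearMap.BilinForm ℝ E}
  {s : Set E} {g : E → ℝ} {x x₁ x₂ w w₁ w₂ u : E}

lemma bilin_add_smul_self (hB : B.IsSymm) (v w : E) (t : ℝ) :
    B (v + t • w) (v + t • w) = B v v + 2 * t * B v w + t ^ 2 * B w w := by
  simp only [map_add, map_smul, LinearMap.add_apply, LinearMap.smul_apply, smul_eq_mul, hB.eq w v]
  ring

lemma sub_le_of_isMinOn_add_bilin_along_segment (hB : B.IsSymm) (hg : ConvexOn ℝ s g)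
    (hws : w ∈ s) (hmin : IsMinOn (fun v ↦ g v + B (v - x) (v - x) / 2) s w) (hus : u ∈ s)
    {t : ℝ} (ht₀ : 0 < t) (ht₁ : t ≤ 1) :
    g w - g u ≤ B (w - x) (u - w) + t * (B (u - w) (u - w) / 2) := by
  have h1t : 0 ≤ 1 - t := sub_nonneg.2 ht₁
  have hsum : 1 - t + t = 1 := sub_add_cancel 1 t
  have hle := hmin (hg.1 hws hus h1t ht₀.le hsum)
  have hconv := hg.2 hws hus h1t ht₀.le hsum
  have hsegment : (1 - t) • w + t • u - x = (w - x) + t • (u - w) := by module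
  simp only [Set.mem_ofPred_eq, hsegment, bilin_add_smul_self hB] at hle
  simp only [smul_eq_mul] at hconv
  refine le_of_mul_le_mul_left ?_ ht₀
  linarith

lemma sub_le_of_isMinOn_add_bilin (hB : B.IsSymm) (hg : ConvexOn ℝ s g)
    (hws : w ∈ s) (hmin : IsMinOn (fun v ↦ g v + B (v - x) (v - x) / 2) s w) (hus : u ∈ s) :
    g w - g u ≤ B (w - x) (u - w) := by
  have hlim : Tendsto (fun t : ℝ ↦ B (w - x) (u - w) + t * (B (u - w) (u - w) / 2)) (𝓝[>] 0)
      (𝓝 (B (w - x) (u - w))) :=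
    (Continuous.tendsto' (by fun_prop) _ _ (by simp)).mono_left nhdsWithin_le_nhds
  refine ge_of_tendsto hlim ?_
  filter_upwards [Ioc_mem_nhdsGT zero_lt_one] with t ht
  exact sub_le_of_isMinOn_add_bilin_along_segment hB hg hws hmin hus ht.1 ht.2

lemma bilin_sub_self_le_bilin_sub_of_isMinOn (hB : B.IsSymm) (hg : ConvexOn ℝ s g)
    (hws₁ : w₁ ∈ s) (hmin₁ : IsMinOn (fun v ↦ g v + B (v - x₁) (v - x₁) / 2) s w₁)
    (hws₂ : w₂ ∈ s) (hmin₂ : IsMinOn (fun v ↦ g v + B (v - x₂) (v - x₂) / 2) s w₂) :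
    B (w₁ - w₂) (w₁ - w₂) ≤ B (x₁ - x₂) (w₁ - w₂) := by
  have h₁ := sub_le_of_isMinOn_add_bilin hB hg hws₁ hmin₁ hws₂
  have h₂ := sub_le_of_isMinOn_add_bilin hB hg hws₂ hmin₂ hws₁
  simp only [map_sub, LinearMap.sub_apply] at h₁ h₂ ⊢
  linarith

lemma bilin_sub_self_le_bilin_sub_self_of_isMinOn (hB : B.IsPosSemidef) (hg : ConvexOn ℝ s g)
    (hws₁ : w₁ ∈ s) (hmin₁ : IsMinOn (fun v ↦ g v + B (v - x₁) (v - x₁) / 2) s w₁)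
    (hws₂ : w₂ ∈ s) (hmin₂ : IsMinOn (fun v ↦ g v + B (v - x₂) (v - x₂) / 2) s w₂) :
    B (w₁ - w₂) (w₁ - w₂) ≤ B (x₁ - x₂) (x₁ - x₂) := by
  have hfirm := bilin_sub_self_le_bilin_sub_of_isMinOn hB.isSymm hg hws₁ hmin₁ hws₂ hmin₂
  have hnonneg := hB.nonneg ((x₁ - x₂) + (-1 : ℝ) • (w₁ - w₂))
  rw [bilin_add_smul_self hB.isSymm] at hnonneg
  linarith

end BilinearProx

theorem scaled_prox_lipschitz_general {E : Type*} [SeminormedAddCommGroup E] [Module ℝ E]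
    {B : LinearMap.BilinForm ℝ E} {m M : ℝ} (hB : B.IsSymm) (hm : 0 < m)
    (hlower : ∀ v, m * ‖v‖ ^ 2 ≤ B v v) (hupper : ∀ v, B v v ≤ M * ‖v‖ ^ 2)
    {s : Set E} {g : E → ℝ} (hg : ConvexOn ℝ s g) {x₁ x₂ w₁ w₂ : E}
    (hws₁ : w₁ ∈ s) (hmin₁ : IsMinOn (fun v ↦ g v + B (v - x₁) (v - x₁) / 2) s w₁)
    (hws₂ : w₂ ∈ s) (hmin₂ : IsMinOn (fun v ↦ g v + B (v - x₂) (v - x₂) / 2) s w₂) :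
    ‖w₁ - w₂‖ ≤ √(M / m) * ‖x₁ - x₂‖ := by
  have hpos : B.IsPosSemidef := ⟨hB, ⟨fun v ↦ (by positivity : 0 ≤ m * ‖v‖ ^ 2).trans (hlower v)⟩⟩
  have hsq : m * ‖w₁ - w₂‖ ^ 2 ≤ M * ‖x₁ - x₂‖ ^ 2 :=
    calc m * ‖w₁ - w₂‖ ^ 2 ≤ B (w₁ - w₂) (w₁ - w₂) := hlower _
      _ ≤ B (x₁ - x₂) (x₁ - x₂) :=
        bilin_sub_self_le_bilin_sub_self_of_isMinOn hpos hg hws₁ hmin₁ hws₂ hmin₂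
      _ ≤ M * ‖x₁ - x₂‖ ^ 2 := hupper _
  calc ‖w₁ - w₂‖ ≤ √(M / m * ‖x₁ - x₂‖ ^ 2) := by
        refine Real.le_sqrt_of_sq_le ?_
        rwa [div_mul_eq_mul_div, le_div_iff₀' hm]
    _ = √(M / m) * ‖x₁ - x₂‖ := by
        rw [Real.sqrt_mul' _ (sq_nonneg _), Real.sqrt_sq (norm_nonneg _)]

section Eigenvalues

variable {𝕜 n : Type*} [RCLike 𝕜] [Fintype n] [DecidableEq n] {A : Matrix n n 𝕜}

lemma re_inner_toEuclideanLin_eq_sum_eigenvalues (hA : A.IsHermitian) (v : EuclideanSpace 𝕜 n) :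
    RCLike.re (inner 𝕜 v (Matrix.toEuclideanLin A v)) =
      ∑ i, hA.eigenvalues i * ‖inner 𝕜 v (hA.eigenvectorBasis i)‖ ^ 2 := by
  have hsymm := Matrix.isSymmetric_toEuclideanLin_iff.2 hA
  have heigen (i : n) : Matrix.toEuclideanLin A (hA.eigenvectorBasis i) =
      (hA.eigenvalues i : 𝕜) • hA.eigenvectorBasis i := by
    ext j
    simpa [RCLike.real_smul_eq_coe_mul] using congrFun (hA.mulVec_eigenvectorBasis i) j
  rw [← hA.eigenvectorBasis.sum_inner_mul_inner, map_sum]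
  refine Finset.sum_congr rfl fun i _ ↦ ?_
  rw [← hsymm, heigen, inner_smul_left, RCLike.conj_ofReal, mul_left_comm, RCLike.re_ofReal_mul,
    inner_mul_symm_re_eq_norm, norm_mul, norm_inner_symm (hA.eigenvectorBasis i), sq]

lemma iInf_eigenvalues_le_re_inner_toEuclideanLin (hA : A.IsHermitian) (v : EuclideanSpace 𝕜 n) :
    (⨅ i, hA.eigenvalues i) * ‖v‖ ^ 2 ≤ RCLike.re (inner 𝕜 v (Matrix.toEuclideanLin A v)) := by
  rw [re_inner_toEuclideanLin_eq_sum_eigenvalues hA,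
    ← hA.eigenvectorBasis.sum_sq_norm_inner_left, Finset.mul_sum]
  gcongr with i
  exact ciInf_le (Set.finite_range _).bddBelow i

lemma re_inner_toEuclideanLin_le_iSup_eigenvalues (hA : A.IsHermitian) (v : EuclideanSpace 𝕜 n) :
    RCLike.re (inner 𝕜 v (Matrix.toEuclideanLin A v)) ≤ (⨆ i, hA.eigenvalues i) * ‖v‖ ^ 2 := by
  rw [re_inner_toEuclideanLin_eq_sum_eigenvalues hA,
    ← hA.eigenvectorBasis.sum_sq_norm_inner_left, Finset.mul_sum]
  gcongr with i
  exact le_ciSup (Set.finite_range _).bddAbove i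

open scoped ComplexOrder in
lemma iInf_eigenvalues_pos [Nonempty n] (hA : A.PosDef) : 0 < ⨅ i, hA.1.eigenvalues i := by
  obtain ⟨i, hi⟩ := exists_eq_ciInf_of_finite (f := hA.1.eigenvalues)
  exact hi ▸ hA.eigenvalues_pos i

end Eigenvalues

section ExtendedReal

variable {d : ℕ} {f : EuclideanSpace ℝ (Fin d) → EReal} {C : Matrix (Fin d) (Fin d) ℝ}
  {x w u : EuclideanSpace ℝ (Fin d)}

lemma ConvexFnE.convexOn_toReal (hf : ConvexFnE f) (hbot : ∀ x, f x ≠ ⊥) :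
    ConvexOn ℝ {x | f x ≠ ⊤} fun x ↦ (f x).toReal := by
  have hle {x y} (hx : f x ≠ ⊤) (hy : f y ≠ ⊤) {a b : ℝ} (ha : 0 ≤ a) (hb : 0 ≤ b)
      (hab : a + b = 1) :
      f (a • x + b • y) ≤ ((a * (f x).toReal + b * (f y).toReal : ℝ) : EReal) := by
    simpa [EReal.coe_toReal, hx, hy, hbot] using hf x y a b ha hb hab
  refine ⟨fun x hx y hy a b ha hb hab ↦ ?_, fun x hx y hy a b ha hb hab ↦ ?_⟩
  · exact ne_top_of_le_ne_top (EReal.coe_ne_top _) (hle hx hy ha hb hab)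
  · exact EReal.toReal_le_toReal (hle hx hy ha hb hab) (hbot _) (EReal.coe_ne_top _)

lemma ne_top_of_mem_proxSet (hw : w ∈ proxSet f C x) (hu : f u ≠ ⊤) : f w ≠ ⊤ := by
  intro hwtop
  have hle := hw u
  rw [hwtop, EReal.top_add_coe, top_le_iff] at hle
  exact EReal.add_ne_top hu (EReal.coe_ne_top _) hle

lemma isMinOn_toReal_of_mem_proxSet (hbot : ∀ x, f x ≠ ⊥) (hw : w ∈ proxSet f C x) :
    IsMinOn (fun v ↦ (f v).toReal + cnormSq C (v - x) / 2) {v | f v ≠ ⊤} w := by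
  intro u hu
  have hle := hw u
  rw [← EReal.coe_toReal (ne_top_of_mem_proxSet hw hu) (hbot w),
    ← EReal.coe_toReal hu (hbot u)] at hle
  exact_mod_cast hle

end ExtendedReal

/-- The bilinear form `(v, w) ↦ vᵀ C w`, whose quadratic form is `cnormSq C`; it presents the
penalty of `proxSet` as an instance of a bilinear form on a real vector space. -/
noncomputable def scaledInner {d : ℕ} (C : Matrix (Fin d) (Fin d) ℝ) :
    LinearMap.BilinForm ℝ (EuclideanSpace ℝ (Fin d)) :=
  (innerₗ _).compl₂ (Matrix.toEuclideanLin C)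

lemma isSymm_scaledInner {d : ℕ} {C : Matrix (Fin d) (Fin d) ℝ} (hC : C.IsHermitian) :
    (scaledInner C).IsSymm :=
  ⟨fun v w ↦ (real_inner_comm _ _).trans (Matrix.isSymmetric_toEuclideanLin_iff.2 hC w v)⟩

/-- The scaled proximal operator of a proper convex function is Lipschitz continuous in the
Euclidean norm with constant `√(λ_max(C)/λ_min(C))`. -/
theorem scaled_prox_lipschitz
    (d : ℕ) (hd : 0 < d) (h : EuclideanSpace ℝ (Fin d) → EReal)
    (hproper : ProperFn h) (hconv : ConvexFnE h)
    (C : Matrix (Fin d) (Fin d) ℝ) (hC : C.PosDef)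
    (x₁ x₂ w₁ w₂ : EuclideanSpace ℝ (Fin d))
    (hw₁ : w₁ ∈ proxSet h C x₁) (hw₂ : w₂ ∈ proxSet h C x₂) :
    ‖w₁ - w₂‖ ≤
      Real.sqrt ((⨆ i, hC.1.eigenvalues i) / (⨅ i, hC.1.eigenvalues i)) * ‖x₁ - x₂‖ := by
  have : Nonempty (Fin d) := Fin.pos_iff_nonempty.1 hd
  obtain ⟨u, hu⟩ := hproper.1
  exact scaled_prox_lipschitz_general (B := scaledInner C) (isSymm_scaledInner hC.1)
    (iInf_eigenvalues_pos hC) (iInf_eigenvalues_le_re_inner_toEuclideanLin hC.1)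
    (re_inner_toEuclideanLin_le_iSup_eigenvalues hC.1) (hconv.convexOn_toReal hproper.2)
    (ne_top_of_mem_proxSet hw₁ hu) (isMinOn_toReal_of_mem_proxSet hproper.2 hw₁)
    (ne_top_of_mem_proxSet hw₂ hu) (isMinOn_toReal_of_mem_proxSet hproper.2 hw₂)
end
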